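/- For every multiset {λ_1,...,λ_n} of complex numbers with D(λ_j) ≠ 0 for all j, and every nonincreasing sequence φ(0) ≥ φ(1) ≥ ... ≥ φ(n−J) > 0, there exist A ∈ C^{n×n} with eigenvalues λ_1,...,λ_n (counted with multiplicity) and b ∈ C^n such that for each k = 0,1,...,n−J, the minimum of ‖b − D(A)x‖_2 over x ∈ K_k(A,b) equals φ(k). -/

import Mathlib

/-- The Krylov space `K_k(A,b) = span{b, Ab, ..., A^{k-1}b}` (with `K_0 = {0}`). -/
noncomputable def Krylov (n : ℕ) (A : Matrix (Fin n) (Fin n) ℂ) (b : EuclideanSpace ℂ (Fin n))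
    (k : ℕ) : Submodule ℂ (EuclideanSpace ℂ (Fin n)) :=
  Submodule.span ℂ {x | ∃ i < k, x = (A ^ i).mulVec b}

open Polynomial in
/-- The family that becomes orthonormal. -/
noncomputable def hFam {S : Type} [CommRing S] [Algebra ℂ S] (n m : ℕ) (r d : S) (g : ℕ → ℂ) :
    Fin n → S := fun i =>
  if (i : ℕ) < m then r ^ (i : ℕ) * d
  else if (i : ℕ) = m then (g m)⁻¹ • (1 - ∑ j ∈ Finset.range m, g j • (r ^ j * d))
  else r ^ ((i : ℕ) - m)

open Polynomial in
lemma hFam_pow_mem {S : Type} [CommRing S] [Algebra ℂ S] (n J : ℕ) (hJ : 1 ≤ J) (hn : J < n)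
    (r : S) (D : Polynomial ℂ) (hD : D.natDegree = J) (g : ℕ → ℂ) (hg : g (n - J) ≠ 0) (j : ℕ)
    (hj : j < n) :
    r ^ j ∈ Submodule.span ℂ (Set.range (hFam n (n - J) r (aeval r D) g)) := by
  have hmem : ∀ i (hi : i < n), hFam n (n - J) r (aeval r D) g ⟨i, hi⟩ ∈
      Submodule.span ℂ (Set.range (hFam n (n - J) r (aeval r D) g)) :=
    fun i hi => Submodule.subset_span ⟨_, rfl⟩
  set T := Submodule.span ℂ (Set.range (hFam n (n - J) r (aeval r D) g)) with hT
  have h1 : ∀ i, i < n - J → r ^ i * aeval r D ∈ T := by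
    intro i hi
    have := hmem i (by omega)
    simpa [hFam, hi] using this
  induction j using Nat.strong_induction_on with
  | _ j ih =>
    by_cases hjJ : j < J
    · by_cases h0 : j = 0
      · subst h0
        have h2 := hmem (n - J) (by omega)
        simp only [hFam, lt_irrefl, if_false, if_true] at h2
        have h3 := T.smul_mem (g (n - J)) h2
        rw [smul_smul, mul_inv_cancel₀ hg, one_smul] at h3
        have h4 : ∑ j ∈ Finset.range (n - J), g j • (r ^ j * aeval r D) ∈ T :=
          T.sum_mem fun i hi => T.smul_mem _ (h1 i (Finset.mem_range.1 hi))
        have h5 := T.add_mem h3 h4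
        simpa using h5
      · have h2 := hmem (n - J + j) (by omega)
        have e1 : ¬ (n - J + j < n - J) := by omega
        simpa [hFam, h0] using h2
    · have h2 := h1 (j - J) (by omega)
      rw [aeval_eq_sum_range, hD, Finset.sum_range_succ, mul_add, Finset.mul_sum] at h2
      have h3 : ∑ i ∈ Finset.range J, r ^ (j - J) * D.coeff i • r ^ i ∈ T := by
        refine T.sum_mem fun i hi => ?_
        have hi' := Finset.mem_range.1 hi
        rw [mul_smul_comm, ← pow_add]
        exact T.smul_mem _ (ih _ (by omega) (by omega))
      have h4 := (T.add_mem_iff_right h3).1 h2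
      rw [mul_smul_comm, ← pow_add, Nat.sub_add_cancel (by omega)] at h4
      have hc : D.coeff J ≠ 0 := by
        rw [← hD]
        apply leadingCoeff_ne_zero.2
        rintro rfl
        simp at hD
        omega
      exact (T.smul_mem_iff hc).1 h4

open Polynomial in
lemma exists_basis {S : Type} [CommRing S] [Algebra ℂ S] (n J : ℕ) (hJ : 1 ≤ J) (hn : J < n)
    (pb : PowerBasis ℂ S) (hpb : pb.dim = n)
    (D : Polynomial ℂ) (hD : D.natDegree = J) (g : ℕ → ℂ) (hg : g (n - J) ≠ 0) :
    ∃ B : Module.Basis (Fin n) ℂ S,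
      (∀ i (hi : i < n - J), pb.gen ^ i * aeval pb.gen D = B ⟨i, by omega⟩) ∧
      (∀ i : Fin n, B.repr 1 i = if (i : ℕ) ≤ n - J then g i else 0) := by
  have hfin : Fintype.card (Fin n) = Module.finrank ℂ S := by
    rw [pb.finrank, hpb, Fintype.card_fin]
  have hspan : ⊤ ≤ Submodule.span ℂ (Set.range (hFam n (n - J) pb.gen (aeval pb.gen D) g)) := by
    rw [← pb.basis.span_eq, Submodule.span_le]
    rintro _ ⟨i, rfl⟩
    rw [pb.basis_eq_pow]
    exact hFam_pow_mem n J hJ hn _ D hD g hg _ (hpb ▸ i.2)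
  let B := basisOfTopLeSpanOfCardEqFinrank _ hspan hfin
  have hB : ∀ i, B i = hFam n (n - J) pb.gen (aeval pb.gen D) g i := fun i => by
    simp [B]
  have h1 : ∀ i (hi : i < n - J), pb.gen ^ i * aeval pb.gen D = B ⟨i, by omega⟩ := by
    intro i hi
    rw [hB]; simp [hFam, hi]
  refine ⟨B, h1, ?_⟩
  have hone : (1 : S) = ∑ i : Fin n, (if (i : ℕ) ≤ n - J then g i else 0) • B i := by
    let F : ℕ → S := fun i => if h : i < n then (if i ≤ n - J then g i else 0) • B ⟨i, h⟩ else 0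
    have e1 : ∑ i : Fin n, (if (i : ℕ) ≤ n - J then g i else 0) • B i = ∑ i ∈ Finset.range n, F i := by
      rw [Finset.sum_range]
      refine Finset.sum_congr rfl fun i _ => ?_
      simp [F]
    have e2 : ∑ i ∈ Finset.range n, F i = ∑ i ∈ Finset.range (n - J + 1), F i := by
      symm
      apply Finset.sum_subset
      · intro x hx; simp at hx ⊢; omega
      · intro x hx hx'
        simp at hx hx'
        simp [F, show ¬ x ≤ n - J by omega]
    rw [e1, e2, Finset.sum_range_succ]
    have e3 : F (n - J) = 1 - ∑ j ∈ Finset.range (n - J), g j • (pb.gen ^ j * aeval pb.gen D) := by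
      simp only [F, hB, hFam, le_refl, if_true, lt_irrefl, if_false,
        dif_pos (show n - J < n by omega)]
      rw [smul_smul, mul_inv_cancel₀ hg, one_smul]
    have e4 : ∑ i ∈ Finset.range (n - J), F i =
        ∑ j ∈ Finset.range (n - J), g j • (pb.gen ^ j * aeval pb.gen D) := by
      refine Finset.sum_congr rfl fun i hi => ?_
      have hi' := Finset.mem_range.1 hi
      rw [h1 i hi']
      simp [F, show i < n by omega, hi'.le]
    rw [e3, e4]; ring
  intro i
  rw [hone, B.repr_sum_self]

lemma tail_sum (n m : ℕ) (hm : m < n) (φ : ℕ → ℝ) (hmono : ∀ k, k < m → φ (k + 1) ≤ φ k)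
    (hpos : 0 < φ m) (g : ℕ → ℂ) (hgm : ‖g m‖ ^ 2 = φ m ^ 2)
    (hg : ∀ i < m, ‖g i‖ ^ 2 = φ i ^ 2 - φ (i + 1) ^ 2) (k : ℕ) (hk : k ≤ m) :
    ∑ i : Fin n, (if k ≤ (i : ℕ) then ‖(if (i : ℕ) ≤ m then g i else 0 : ℂ)‖ ^ 2 else 0)
      = φ k ^ 2 := by
  have e : ∑ i : Fin n, (if k ≤ (i : ℕ) then ‖(if (i : ℕ) ≤ m then g i else 0 : ℂ)‖ ^ 2 else 0)
      = ∑ i ∈ Finset.Ico k (m + 1), ‖g i‖ ^ 2 := by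
    rw [← Finset.sum_range (fun i => if k ≤ i then ‖(if i ≤ m then g i else 0 : ℂ)‖ ^ 2 else 0)]
    symm
    rw [← Finset.sum_filter]
    have : Finset.Ico k (m + 1) ⊆ Finset.filter (fun i => k ≤ i) (Finset.range n) := by
      intro x hx; simp at hx ⊢; omega
    rw [← Finset.sum_subset this]
    · refine Finset.sum_congr rfl fun i hi => ?_
      simp at hi
      rw [if_pos (by omega)]
    · intro x hx hx'
      simp at hx hx'
      rw [if_neg (by omega)]; simp
  rw [e, Finset.sum_Ico_succ_top hk, hgm]
  have : ∑ i ∈ Finset.Ico k m, ‖g i‖ ^ 2 = ∑ i ∈ Finset.Ico k m, (φ i ^ 2 - φ (i + 1) ^ 2) :=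
    Finset.sum_congr rfl fun i hi => hg i (Finset.mem_Ico.1 hi).2
  rw [this]
  have := Finset.sum_Ico_sub (fun i => φ i ^ 2) hk
  have h2 : ∑ i ∈ Finset.Ico k m, (φ i ^ 2 - φ (i + 1) ^ 2) =
    - ∑ i ∈ Finset.Ico k m, (φ (i + 1) ^ 2 - φ i ^ 2) := by
    rw [← Finset.sum_neg_distrib]; simp
  rw [h2, this]; ring

lemma phi_pos (m : ℕ) (φ : ℕ → ℝ) (hmono : ∀ k, k < m → φ (k + 1) ≤ φ k)
    (hpos : 0 < φ m) (k : ℕ) (hk : k ≤ m) : 0 < φ k := by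
  induction hk using Nat.decreasingInduction with
  | self => exact hpos
  | of_succ k hk ih => exact ih.trans_le (hmono k hk)

open Polynomial in
/-- Any nonincreasing convergence curve with any prescribed eigenvalues: for any eigenvalues
`λ_1,...,λ_n` with `D(λ_j) ≠ 0` and any nonincreasing `φ(0) ≥ ... ≥ φ(n−J) > 0`, there exist
`A` with characteristic polynomial `∏ (z − λ_j)` and `b` such that for every `k ≤ n−J` the
minimum of `‖b − D(A)x‖₂` over `x ∈ K_k(A,b)` equals `φ(k)`. -/
theorem stmt17 (n J : ℕ) (hJ : 1 ≤ J) (hn : J < n)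
    (D : Polynomial ℂ) (hD : D.natDegree = J)
    (lam : Fin n → ℂ) (hroot : ∀ j, D.eval (lam j) ≠ 0)
    (φ : ℕ → ℝ) (hmono : ∀ k, k < n - J → φ (k + 1) ≤ φ k) (hpos : 0 < φ (n - J)) :
    ∃ (A : Matrix (Fin n) (Fin n) ℂ) (b : EuclideanSpace ℂ (Fin n)),
      A.charpoly = ∏ j : Fin n, (X - C (lam j)) ∧
      ∀ k ≤ n - J,
        IsLeast {r : ℝ | ∃ x ∈ Krylov n A b k,
          r = ‖b - (WithLp.equiv 2 (Fin n → ℂ)).symm ((aeval A D).mulVec x)‖} (φ k) := by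
  classical
  set m := n - J with hm
  have hφ := phi_pos m φ hmono hpos
  let g : ℕ → ℂ := fun i => if i = m then (φ m : ℂ) else (Real.sqrt (φ i ^ 2 - φ (i + 1) ^ 2) : ℂ)
  have hgm0 : g m ≠ 0 := by simpa [g] using hpos.ne'
  have hgm : ‖g m‖ ^ 2 = φ m ^ 2 := by simp [g]
  have hg : ∀ i < m, ‖g i‖ ^ 2 = φ i ^ 2 - φ (i + 1) ^ 2 := by
    intro i hi
    have h1 := hφ (i + 1) hi
    have h2 := hmono i hi
    have h3 : 0 ≤ φ i ^ 2 - φ (i + 1) ^ 2 := by nlinarith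
    simp only [g, if_neg hi.ne, Complex.norm_real, Real.norm_eq_abs, sq_abs]
    exact Real.sq_sqrt h3
  have htail := tail_sum n m (by omega) φ hmono hpos g hgm hg
  let p : Polynomial ℂ := ∏ j : Fin n, (X - C (lam j))
  have hp : p.Monic := monic_prod_of_monic _ _ fun j _ => monic_X_sub_C _
  have hpd : p.natDegree = n := by
    simp only [p]
    rw [natDegree_prod_of_monic _ _ fun j _ => monic_X_sub_C _]
    simp
  let pb := AdjoinRoot.powerBasis' hp
  have hdim : pb.dim = n := by simp [pb, hpd]
  obtain ⟨B, hB1, hB2⟩ := exists_basis n J hJ hn pb hdim D hD g hgm0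
  let A := Algebra.leftMulMatrix B pb.gen
  let b : EuclideanSpace ℂ (Fin n) := WithLp.toLp 2 (B.repr 1)
  have hrep : ∀ q : Polynomial ℂ, ∀ y, (aeval A q).mulVec (B.repr y) = B.repr (aeval pb.gen q * y) := by
    intro q y
    rw [← Algebra.leftMulMatrix_mulVec_repr, aeval_algHom_apply]
  have hpow : ∀ i, (A ^ i).mulVec b = B.repr (pb.gen ^ i) := by
    intro i
    have := hrep (X ^ i) 1
    simpa using this
  have hDpow : ∀ i (hi : i < m), (aeval A D).mulVec ((A ^ i).mulVec b) =
      Pi.single (⟨i, by omega⟩ : Fin n) (1 : ℂ) := by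
    intro i hi
    rw [hpow, hrep, mul_comm, hB1 i hi, B.repr_self, Finsupp.single_eq_pi_single]
  have hb : ∀ i : Fin n, b i = if (i : ℕ) ≤ m then g i else 0 := hB2
  have hA : A.charpoly = p := by
    have h1 : A.charpoly = minpoly ℂ pb.gen := by
      rw [← charpoly_leftMulMatrix pb]
      simp only [A, Algebra.leftMulMatrix_apply]
      have : Module.Finite ℂ (AdjoinRoot p) := pb.finite
      rw [LinearMap.charpoly_toMatrix, LinearMap.charpoly_toMatrix]
    rw [h1]
    have := AdjoinRoot.minpoly_root (f := p) hp.ne_zero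
    rw [hp.leadingCoeff, inv_one, C_1, mul_one] at this
    simpa [pb] using this
  refine ⟨A, b, hA, fun k hk => ⟨?_, ?_⟩⟩
  · refine ⟨∑ i ∈ Finset.range k, g i • WithLp.toLp 2 ((A ^ i).mulVec b), ?_, ?_⟩
    · refine Submodule.sum_mem _ fun i hi => Submodule.smul_mem _ _ (Submodule.subset_span ?_)
      exact ⟨i, Finset.mem_range.1 hi, rfl⟩
    · have key : (aeval A D).mulVec (∑ i ∈ Finset.range k, g i • WithLp.toLp 2 ((A ^ i).mulVec b) :
          EuclideanSpace ℂ (Fin n)) = fun i : Fin n => if (i : ℕ) < k then g i else 0 := by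
        rw [WithLp.ofLp_sum, Matrix.mulVec_sum]
        simp only [WithLp.ofLp_smul, Matrix.mulVec_smul]
        ext i
        rw [Finset.sum_apply]
        rw [Finset.sum_congr rfl (g := fun j => if j = (i : ℕ) then g i else 0)]
        · simp
        · intro j hj
          have hj' := Finset.mem_range.1 hj
          rw [hDpow j (by omega)]
          by_cases h : j = (i : ℕ)
          · subst h; simp
          · rw [if_neg h]
            simp [Pi.single_apply, Fin.ext_iff, Ne.symm h]
      rw [← Real.sqrt_sq (hφ k hk).le, ← htail k hk, EuclideanSpace.norm_eq, key]
      congr 1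
      refine Finset.sum_congr rfl fun i _ => ?_
      simp only [PiLp.sub_apply, hb, WithLp.equiv_symm_apply]
      by_cases h : k ≤ (i : ℕ)
      · simp [h, not_lt.2 h]
      · have h' := not_le.1 h
        simp [h, h', show (i : ℕ) ≤ m by omega]
  · rintro r ⟨x, hx, rfl⟩
    have hz : ∀ i : Fin n, k ≤ (i : ℕ) → (aeval A D).mulVec x i = 0 := by
      intro i hi
      induction hx using Submodule.span_induction with
      | mem x hx =>
        obtain ⟨j, hj, hx⟩ := hx
        rw [hx, hDpow j (by omega)]
        have : (i : ℕ) ≠ j := by omega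
        simp [Pi.single_apply, Fin.ext_iff, this]
      | zero => simp
      | add x y _ _ hx hy => rw [WithLp.ofLp_add, Matrix.mulVec_add, Pi.add_apply, hx, hy, add_zero]
      | smul a x _ hx => rw [WithLp.ofLp_smul, Matrix.mulVec_smul, Pi.smul_apply, hx, smul_zero]
    rw [← Real.sqrt_sq (hφ k hk).le, ← htail k hk, EuclideanSpace.norm_eq]
    apply Real.sqrt_le_sqrt
    refine Finset.sum_le_sum fun i _ => ?_
    simp only [PiLp.sub_apply, hb, WithLp.equiv_symm_apply]
    split_ifs with h
    · rw [hz i h, sub_zero]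
    · rw [hz i h, sub_zero]
    · positivity
    · positivity
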